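/- arXiv:1908.03666 — 2 statements merged into one kernel-verified Lean document; each statement's English description precedes it below -/
import Mathlib

section
/- Let 0 < α < 2, let β be an arbitrary real number, and let μ satisfy πα/2 < μ < min{π, πα}. Then there exists a positive constant C (depending only on α, β, μ) such that |E_{α,β}(z)| ≤ C/(1+|z|) for all complex z with μ ≤ |arg(z)| ≤ π (including |z| = 0). -/
open Real

/-- The two-parameter Mittag-Leffler function on the complex plane,
with the convention `1/Γ = 0` at the poles of `Γ` (as in Mathlib's `Complex.Gamma`). -/
noncomputable def mittagLefflerC (α β : ℝ) (z : ℂ) : ℂ :=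
  ∑' k : ℕ, z ^ k / Complex.Gamma (((k : ℝ) * α + β : ℝ) : ℂ)

/-!
For `b > 1`, Fourier inversion on the line `Re s = c` gives `1 / Γ(b) = (2πi)⁻¹ ∫ eˢ s⁻ᵇ ds`, and
summing a geometric series yields `E_{α,β}(z) = (2πi)⁻¹ ∫ eˢ s⁻ᵝ / (1 - z s⁻ᵅ) ds` for `β > 1` and
small `z`. Both sides are holomorphic on the sector `|arg z| > πα/2`, where `z s⁻ᵅ` stays away from
the positive reals, so the formula holds there by the identity theorem. On a smaller sector
`|1 - z s⁻ᵅ| ≥ m (1 + |z| |s|⁻ᵅ)` with `m > 0`, which bounds `|z| |E_{α,β}(z)|` by a convergent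
integral when `β > α + 1`.

The recurrence `E_{α,β} = β E_{α,β+1} + α z ∂_z E_{α,β+1}` lowers `β`: Cauchy's estimate on a disc
of radius proportional to `|z|` bounds `|z|² |∂_z E_{α,β+1}(z)|` at the price of shrinking the
sector, so arbitrary real `β` is reached in finitely many steps.
-/

open MeasureTheory Filter Topology FourierTransform
open Complex (I)

section Sectors

variable {A B δ : ℝ} {z w : ℂ}

lemma lt_abs_arg_iff (hA₀ : 0 ≤ A) (hA : A ≤ π) : A < |z.arg| ↔ z.re < cos A * ‖z‖ := by
  rcases eq_or_ne z 0 with rfl | hz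
  · simp [hA₀]
  · rw [← div_lt_iff₀ (norm_pos_iff.2 hz), ← Complex.cos_arg hz, ← cos_abs z.arg,
      strictAntiOn_cos.lt_iff_gt ⟨abs_nonneg _, Complex.abs_arg_le_pi z⟩ ⟨hA₀, hA⟩]

lemma le_abs_arg_iff (hA₀ : 0 ≤ A) (hA : A ≤ π) (hz : z ≠ 0) :
    A ≤ |z.arg| ↔ z.re ≤ cos A * ‖z‖ := by
  rw [← div_le_iff₀ (norm_pos_iff.2 hz), ← Complex.cos_arg hz, ← cos_abs z.arg,
    strictAntiOn_cos.le_iff_ge ⟨abs_nonneg _, Complex.abs_arg_le_pi z⟩ ⟨hA₀, hA⟩]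

lemma re_le_cos_mul_norm (hA₀ : 0 ≤ A) (hA : A ≤ |z.arg|) : z.re ≤ cos A * ‖z‖ := by
  rcases eq_or_ne z 0 with rfl | hz
  · simp
  · exact (le_abs_arg_iff hA₀ (hA.trans (Complex.abs_arg_le_pi z)) hz).1 hA

lemma ne_zero_of_lt_abs_arg (hA₀ : 0 ≤ A) (hA : A < |z.arg|) : z ≠ 0 := by
  rintro rfl
  simp [hA₀.not_gt] at hA

lemma isOpen_setOf_lt_abs_arg (hA₀ : 0 ≤ A) : IsOpen {z : ℂ | A < |z.arg|} := by
  rcases le_total A π with hA | hA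
  · simp only [lt_abs_arg_iff hA₀ hA]
    exact isOpen_lt Complex.continuous_re (by fun_prop)
  · simp [((Complex.abs_arg_le_pi _).trans hA).not_gt]

lemma re_sub_mul_norm_add_le {k : ℝ} (hk : |k| ≤ 1) (z w : ℂ) :
    (z + w).re - k * ‖z + w‖ ≤ z.re - k * ‖z‖ + (w.re + ‖w‖) := by
  have hnorm : |‖z + w‖ - ‖z‖| ≤ ‖w‖ := by simpa using abs_norm_sub_norm_le (z + w) z
  have hmul : |k * (‖z + w‖ - ‖z‖)| ≤ ‖w‖ := by
    rw [abs_mul]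
    exact (mul_le_of_le_one_left (abs_nonneg _) hk).trans hnorm
  rw [Complex.add_re]
  linarith [neg_le_of_abs_le hmul]

lemma isPreconnected_setOf_lt_abs_arg (hA₀ : 0 ≤ A) : IsPreconnected {z : ℂ | A < |z.arg|} := by
  rcases lt_or_ge A π with hA | hA
  · have hmem : (-1 : ℂ) ∈ {z : ℂ | A < |z.arg|} := by simpa [abs_of_pos pi_pos] using hA
    have hstar : StarConvex ℝ (-1 : ℂ) {z : ℂ | A < |z.arg|} := by
      refine starConvex_iff_forall_pos hmem |>.2 fun z hz a b ha hb _ => ?_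
      rw [Set.mem_ofPred_eq, lt_abs_arg_iff hA₀ hA.le] at hz ⊢
      have h := re_sub_mul_norm_add_le (abs_cos_le_one A) (b • z) (a • (-1 : ℂ))
      rw [norm_smul_of_nonneg hb.le, norm_smul_of_nonneg ha.le, norm_neg, norm_one,
        Complex.smul_re, Complex.smul_re, Complex.neg_re, Complex.one_re, smul_eq_mul,
        smul_eq_mul, add_comm (b • z)] at h
      linarith [mul_lt_mul_of_pos_left hz hb]
    exact (hstar.isPathConnected hmem).isConnected.isPreconnected
  · simp [((Complex.abs_arg_le_pi _).trans hA).not_gt, isPreconnected_empty]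

lemma exists_forall_norm_sub_le_imp_lt_abs_arg (hA₀ : 0 ≤ A) (hAB : A < B) :
    ∃ c > 0, ∀ z w : ℂ, B ≤ |z.arg| → ‖w - z‖ ≤ c * ‖z‖ → A < |w.arg| := by
  rcases le_or_gt B π with hB | hB
  · have hcos : cos B < cos A := cos_lt_cos_of_nonneg_of_le_pi hA₀ hB hAB
    refine ⟨(cos A - cos B) / 3, by linarith, fun z w hz hw => ?_⟩
    rw [lt_abs_arg_iff hA₀ (hAB.le.trans hB)]
    have h := re_sub_mul_norm_add_le (abs_cos_le_one A) z (w - z)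
    rw [add_sub_cancel] at h
    have hz₀ : 0 < ‖z‖ := norm_pos_iff.2 (ne_zero_of_lt_abs_arg hA₀ (hAB.trans_le hz))
    have hre := re_le_cos_mul_norm (hA₀.trans hAB.le) hz
    nlinarith [Complex.re_le_norm (w - z)]
  · exact ⟨1, one_pos, fun z _ hz _ => absurd (Complex.abs_arg_le_pi z) (hB.trans_le hz).not_ge⟩

lemma abs_arg_exp_le (w : ℂ) : |(Complex.exp w).arg| ≤ |w.im| := by
  by_cases hw : w.im ∈ Set.Ioc (-π) π
  · rw [Complex.arg_exp, (toIocMod_eq_self _).2 (by rwa [show -π + 2 * π = π by ring])]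
  · refine (Complex.abs_arg_le_pi _).trans ?_
    contrapose! hw
    exact ⟨(abs_lt.1 hw).1, (abs_lt.1 hw).2.le⟩

lemma abs_arg_cpow_le (z : ℂ) (a : ℝ) : |(z ^ (a : ℂ)).arg| ≤ |a| * |z.arg| := by
  rcases eq_or_ne z 0 with rfl | hz
  · rcases eq_or_ne a 0 with rfl | ha <;> simp [*]
  · rw [Complex.cpow_def_of_ne_zero hz, ← abs_mul, mul_comm a]
    simpa [Complex.log_im] using abs_arg_exp_le (Complex.log z * a)

lemma abs_arg_sub_le_abs_arg_mul (z : ℂ) (hw : w ≠ 0) :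
    |z.arg| - |w.arg| ≤ |(z * w).arg| := by
  rcases eq_or_ne z 0 with rfl | hz
  · simp
  · have h := InnerProductGeometry.angle_le_angle_add_angle 1 (z * w) z
    rw [Complex.angle_eq_abs_arg (mul_ne_zero hz hw) hz, mul_div_cancel_left₀ _ hz,
      Complex.angle_one_left hz, Complex.angle_one_left (mul_ne_zero hz hw)] at h
    linarith

lemma sin_half_sub_pos (hA₀ : 0 ≤ A) (hAB : A < B) (hB : B ≤ |z.arg|) :
    0 < sin ((B - A) / 2) :=
  sin_pos_of_pos_of_lt_pi (by linarith) (by linarith [Complex.abs_arg_le_pi z, pi_pos])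

lemma sin_half_mul_one_add_norm_le (hδ₀ : 0 ≤ δ) (hδ : δ ≤ |w.arg|) :
    sin (δ / 2) * (1 + ‖w‖) ≤ ‖1 - w‖ := by
  refine le_of_sq_le_sq ?_ (norm_nonneg _)
  have hcos : cos δ = 1 - 2 * sin (δ / 2) ^ 2 := by
    rw [sin_sq_eq_half_sub, mul_div_cancel₀ _ two_ne_zero]; ring
  have hnorm : ‖1 - w‖ ^ 2 = 1 + ‖w‖ ^ 2 - 2 * w.re := by
    simp only [Complex.sq_norm, Complex.normSq_apply, Complex.sub_re, Complex.sub_im,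
      Complex.one_re, Complex.one_im]
    ring
  have hre := re_le_cos_mul_norm hδ₀ hδ
  calc (sin (δ / 2) * (1 + ‖w‖)) ^ 2
      ≤ (sin (δ / 2) * (1 + ‖w‖)) ^ 2 + cos (δ / 2) ^ 2 * (1 - ‖w‖) ^ 2 := by
        linarith [mul_nonneg (sq_nonneg (cos (δ / 2))) (sq_nonneg (1 - ‖w‖))]
    _ = 1 + ‖w‖ ^ 2 - 2 * (cos δ * ‖w‖) := by rw [hcos, cos_sq']; ring
    _ ≤ ‖1 - w‖ ^ 2 := by rw [hnorm]; linarith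

lemma sin_half_mul_one_add_le_norm_one_sub_mul_cpow {α μ : ℝ} {s : ℂ} (hα : 0 ≤ α)
    (hμ : π * α / 2 ≤ μ) (hz : μ ≤ |z.arg|) (hs : 0 < s.re) :
    sin ((μ - π * α / 2) / 2) * (1 + ‖z‖ * ‖s‖ ^ (-α)) ≤ ‖1 - z * s ^ (-(α : ℂ))‖ := by
  have hs₀ : s ≠ 0 := by rintro rfl; simp at hs
  have hcpow : |(s ^ (-(α : ℂ))).arg| ≤ π * α / 2 := calc
    |(s ^ (-(α : ℂ))).arg| ≤ α * |s.arg| := by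
      simpa [abs_of_nonneg hα] using abs_arg_cpow_le s (-α)
    _ ≤ α * (π / 2) := by
      gcongr; exact (Complex.abs_arg_lt_pi_div_two_iff.2 (Or.inl hs)).le
    _ = π * α / 2 := by ring
  have hne : s ^ (-(α : ℂ)) ≠ 0 := by simp [Complex.cpow_eq_zero_iff, hs₀]
  have harg := abs_arg_sub_le_abs_arg_mul z hne
  have h := sin_half_mul_one_add_norm_le (sub_nonneg.2 hμ) (w := z * s ^ (-(α : ℂ))) (by linarith)
  rwa [norm_mul, ← Complex.ofReal_neg, Complex.norm_cpow_real, Complex.ofReal_neg] at h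

end Sectors

section Holomorphy

variable {X E : Type*} [MeasurableSpace X] {ν : Measure X} [NormedAddCommGroup E]
  [NormedSpace ℂ E] {U : Set ℂ} {F : ℂ → X → E} {bound : X → ℝ} {z : ℂ}

lemma aestronglyMeasurable_deriv_of_eventually (hmeas : ∀ᶠ w in 𝓝 z, AEStronglyMeasurable (F w) ν)
    (hdiff : ∀ᵐ x ∂ν, DifferentiableAt ℂ (F · x) z) :
    AEStronglyMeasurable (fun x => deriv (F · x) z) ν := by
  obtain ⟨u, hu, hu_meas⟩ :=
    exists_seq_forall_of_frequently (hmeas.filter_mono (nhdsWithin_le_nhds (s := {z}ᶜ))).frequently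
  refine aestronglyMeasurable_of_tendsto_ae atTop (f := fun n x => slope (F · x) z (u n))
    (fun n => ((hu_meas n).sub hmeas.self_of_nhds).const_smul _) ?_
  filter_upwards [hdiff] with x hx
  exact (hasDerivAt_iff_tendsto_slope.1 hx.hasDerivAt).comp hu

lemma differentiableOn_integral_of_norm_le (hU : IsOpen U)
    (hmeas : ∀ z ∈ U, AEStronglyMeasurable (F z) ν)
    (hdiff : ∀ᵐ x ∂ν, DifferentiableOn ℂ (F · x) U)
    (hle : ∀ᵐ x ∂ν, ∀ z ∈ U, ‖F z x‖ ≤ bound x) (hbound : Integrable bound ν) :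
    DifferentiableOn ℂ (fun z => ∫ x, F z x ∂ν) U := by
  intro z hz
  obtain ⟨r, hr, hball⟩ := Metric.nhds_basis_closedBall.mem_iff.1 (hU.mem_nhds hz)
  have hr₂ : 0 < r / 2 := half_pos hr
  have hsub : ∀ w ∈ Metric.ball z (r / 2), Metric.closedBall w (r / 2) ⊆ U := fun w hw =>
    (Metric.closedBall_subset_closedBall' (by linarith [Metric.mem_ball.1 hw])).trans hball
  have hdiffAt : ∀ᵐ x ∂ν, ∀ w ∈ U, DifferentiableAt ℂ (F · x) w := by
    filter_upwards [hdiff] with x hx w hw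
    exact hx.differentiableAt (hU.mem_nhds hw)
  have hderiv := hasDerivAt_integral_of_dominated_loc_of_deriv_le (𝕜 := ℂ)
    (F' := fun w x => deriv (F · x) w) (bound := fun x => bound x / (r / 2))
    (Metric.ball_mem_nhds z hr₂)
    (by filter_upwards [hU.mem_nhds hz] using hmeas)
    (hbound.mono' (hmeas z hz) (hle.mono fun x hx => hx z hz))
    (aestronglyMeasurable_deriv_of_eventually (by filter_upwards [hU.mem_nhds hz] using hmeas)
      (hdiffAt.mono fun x hx => hx z hz))
    (by
      filter_upwards [hdiff, hle] with x hx hx' w hw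
      exact Complex.norm_deriv_le_of_forall_mem_sphere_norm_le hr₂
        (hx.diffContOnCl_ball (hsub w hw)) fun v hv =>
          hx' v (hsub w hw (Metric.sphere_subset_closedBall hv)))
    (hbound.div_const _)
    (by
      filter_upwards [hdiffAt] with x hx w hw
      exact (hx w (hsub w hw (Metric.mem_closedBall_self hr₂.le))).hasDerivAt)
  exact hderiv.2.differentiableAt.differentiableWithinAt

end Holomorphy

section Laplace

variable {a b p : ℂ} {c : ℝ}

lemma norm_cpow_mul_exp_neg_mul {t : ℝ} (ht : 0 < t) :
    ‖(t : ℂ) ^ a * Complex.exp (-(p * t))‖ = t ^ a.re * exp (-(p.re * t)) := by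
  rw [norm_mul, Complex.norm_cpow_eq_rpow_re_of_pos ht, Complex.norm_exp, Complex.neg_re,
    Complex.re_mul_ofReal]

lemma measurable_cpow_mul_exp_neg_mul :
    Measurable fun t : ℝ => (t : ℂ) ^ a * Complex.exp (-(p * t)) := by
  fun_prop

lemma integrableOn_rpow_mul_exp_neg_mul_Ioi {r : ℝ} (hr : -1 < r) (hc : 0 < c) :
    IntegrableOn (fun t : ℝ => t ^ r * exp (-(c * t))) (Set.Ioi 0) := by
  simpa using integrableOn_rpow_mul_exp_neg_mul_rpow hr one_pos hc

lemma integrableOn_cpow_mul_exp_neg_mul_Ioi (ha : -1 < a.re) (hp : 0 < p.re) :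
    IntegrableOn (fun t : ℝ => (t : ℂ) ^ a * Complex.exp (-(p * t))) (Set.Ioi 0) := by
  refine (integrableOn_rpow_mul_exp_neg_mul_Ioi ha hp).mono'
    measurable_cpow_mul_exp_neg_mul.aestronglyMeasurable ?_
  filter_upwards [ae_restrict_mem measurableSet_Ioi] with t ht
  exact (norm_cpow_mul_exp_neg_mul ht).le

lemma differentiableOn_integral_cpow_mul_exp_neg_mul_Ioi (ha : -1 < a.re) :
    DifferentiableOn ℂ (fun p => ∫ t : ℝ in Set.Ioi 0, (t : ℂ) ^ a * Complex.exp (-(p * t)))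
      {p | 0 < p.re} := by
  intro p hp
  obtain ⟨c, hc, hcp⟩ : ∃ c, 0 < c ∧ c < p.re := exists_between hp
  have hU : IsOpen {q : ℂ | c < q.re} := isOpen_lt continuous_const Complex.continuous_re
  refine (DifferentiableOn.differentiableAt ?_ (hU.mem_nhds hcp)).differentiableWithinAt
  refine differentiableOn_integral_of_norm_le hU
    (fun q _ => measurable_cpow_mul_exp_neg_mul.aestronglyMeasurable)
    (Eventually.of_forall fun t => by fun_prop) ?_ (integrableOn_rpow_mul_exp_neg_mul_Ioi ha hc)
  filter_upwards [ae_restrict_mem measurableSet_Ioi] with t (ht : 0 < t) q (hq : c < q.re)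
  rw [norm_cpow_mul_exp_neg_mul ht]
  gcongr

lemma integral_cpow_mul_exp_neg_complex_mul_Ioi (ha : 0 < a.re) (hp : 0 < p.re) :
    ∫ t : ℝ in Set.Ioi 0, (t : ℂ) ^ (a - 1) * Complex.exp (-(p * t))
      = p ^ (-a) * Complex.Gamma a := by
  have hU : IsOpen {p : ℂ | 0 < p.re} := isOpen_lt continuous_const Complex.continuous_re
  have hleft := (differentiableOn_integral_cpow_mul_exp_neg_mul_Ioi (a := a - 1)
    (by simpa using ha)).analyticOnNhd hU
  have hright : DifferentiableOn ℂ (fun p : ℂ => p ^ (-a) * Complex.Gamma a) {p | 0 < p.re} :=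
    fun q hq => ((differentiableAt_id.cpow_const (Or.inl hq)).mul_const _).differentiableWithinAt
  have hreal (r : ℝ) (hr : 0 < r) :
      ∫ t : ℝ in Set.Ioi 0, (t : ℂ) ^ (a - 1) * Complex.exp (-(r * t))
        = (r : ℂ) ^ (-a) * Complex.Gamma a := by
    rw [Complex.integral_cpow_mul_exp_neg_mul_Ioi ha hr, one_div, Complex.inv_cpow _ _
      (by simp [Complex.arg_ofReal_of_nonneg hr.le, pi_ne_zero.symm]), Complex.cpow_neg]
  have hlim : Tendsto ((↑) : ℝ → ℂ) (𝓝[≠] 1) (𝓝[≠] ((1 : ℝ) : ℂ)) :=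
    Complex.continuous_ofReal.continuousWithinAt.tendsto_nhdsWithin
      fun r hr => Complex.ofReal_injective.ne hr
  refine hleft.eqOn_of_preconnected_of_frequently_eq (hright.analyticOnNhd hU)
    (convex_halfSpace_re_gt 0).isPreconnected (z₀ := ((1 : ℝ) : ℂ)) (by simp) ?_ hp
  refine hlim.frequently (Eventually.frequently ?_)
  filter_upwards [nhdsWithin_le_nhds (lt_mem_nhds one_pos)] with r hr using hreal r hr

end Laplace

section VerticalLine

variable {c : ℝ}

lemma le_norm_line (c y : ℝ) : c ≤ ‖(c + y * I : ℂ)‖ := by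
  simpa using Complex.re_le_norm (c + y * I)

lemma norm_line_rpow_neg_le (hc : 0 < c) {r : ℝ} (hr : 0 ≤ r) (y : ℝ) :
    ‖(c + y * I : ℂ)‖ ^ (-r) ≤ c ^ (-r) :=
  rpow_le_rpow_of_nonpos hc (le_norm_line c y) (neg_nonpos.2 hr)

lemma integrable_norm_line_rpow_neg (hc : 0 < c) {r : ℝ} (hr : 1 < r) :
    Integrable fun y : ℝ => ‖(c + y * I : ℂ)‖ ^ (-r) := by
  have h := (integrable_rpow_neg_one_add_norm_sq (E := ℝ) (μ := volume) (r := r)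
    (by simpa using hr)).comp_mul_left' (inv_ne_zero hc.ne') |>.const_mul (c ^ (-r))
  refine h.congr (Eventually.of_forall fun y => ?_)
  have hnorm : ‖(c + y * I : ℂ)‖ = c * (1 + ‖c⁻¹ * y‖ ^ 2) ^ (1 / 2 : ℝ) := by
    rw [← sqrt_eq_rpow, ← sqrt_sq hc.le, ← sqrt_mul (sq_nonneg c), sqrt_sq hc.le,
      Complex.norm_add_mul_I, norm_eq_abs, sq_abs]
    congr 1
    field_simp
  simp only [hnorm]
  rw [mul_rpow hc.le (by positivity), ← rpow_mul (by positivity)]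
  ring_nf

lemma continuous_line_cpow (hc : 0 < c) (b : ℂ) : Continuous fun y : ℝ => (c + y * I : ℂ) ^ b :=
  Continuous.cpow (by fun_prop) continuous_const fun y => Or.inl (by simpa using hc)

lemma integrable_line_cpow_neg (hc : 0 < c) {b : ℂ} (hb : 1 < b.re) :
    Integrable fun y : ℝ => (c + y * I : ℂ) ^ (-b) := by
  refine ((integrable_norm_line_rpow_neg hc hb).mul_const (exp (π * |b.im|))).mono'
    (continuous_line_cpow hc _).aestronglyMeasurable (Eventually.of_forall fun y => ?_)
  calc ‖(c + y * I : ℂ) ^ (-b)‖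
      ≤ ‖(c + y * I : ℂ)‖ ^ (-b.re) / exp ((c + y * I : ℂ).arg * -b.im) := by
        simpa using Complex.norm_cpow_le (c + y * I) (-b)
    _ = ‖(c + y * I : ℂ)‖ ^ (-b.re) * exp ((c + y * I : ℂ).arg * b.im) := by
        rw [mul_neg, exp_neg, div_inv_eq_mul]
    _ ≤ ‖(c + y * I : ℂ)‖ ^ (-b.re) * exp (π * |b.im|) := by
        refine mul_le_mul_of_nonneg_left (exp_le_exp.2 ((le_abs_self _).trans ?_)) (by positivity)
        rw [abs_mul]
        gcongr
        exact Complex.abs_arg_le_pi _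

lemma fourier_indicator_cpow_mul_exp_neg (hc : 0 < c) {a : ℂ} (ha : 0 < a.re) (ξ : ℝ) :
    𝓕 ((Set.Ioi 0).indicator fun t : ℝ => (t : ℂ) ^ (a - 1) * Complex.exp (-(c * t))) ξ
      = (c + (2 * π * ξ : ℝ) * I : ℂ) ^ (-a) * Complex.Gamma a := by
  rw [Real.fourier_real_eq_integral_exp_smul,
    ← integral_cpow_mul_exp_neg_complex_mul_Ioi ha (by simpa using hc),
    ← integral_indicator measurableSet_Ioi]
  congr 1 with t
  by_cases ht : t ∈ Set.Ioi 0
  · rw [Set.indicator_of_mem ht, Set.indicator_of_mem ht, smul_eq_mul, mul_left_comm,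
      ← Complex.exp_add]
    congr 2
    push_cast
    ring
  · rw [Set.indicator_of_notMem ht, Set.indicator_of_notMem ht, smul_zero]

lemma integral_exp_mul_line_cpow_neg (hc : 0 < c) {b : ℂ} (hb : 1 < b.re) {t : ℝ} (ht : 0 < t) :
    ∫ y : ℝ, Complex.exp ((c + y * I) * t) * (c + y * I : ℂ) ^ (-b)
      = 2 * π * (t : ℂ) ^ (b - 1) / Complex.Gamma b := by
  have hb₀ : 0 < b.re := one_pos.trans hb
  set f : ℝ → ℂ := (Set.Ioi 0).indicator fun t : ℝ => (t : ℂ) ^ (b - 1) * Complex.exp (-(c * t))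
  have hf : Integrable f := (integrable_indicator_iff measurableSet_Ioi).2
    (integrableOn_cpow_mul_exp_neg_mul_Ioi (by simpa using hb₀) (by simpa using hc))
  have hfourier : 𝓕 f = fun ξ => (c + (2 * π * ξ : ℝ) * I : ℂ) ^ (-b) * Complex.Gamma b :=
    funext (fourier_indicator_cpow_mul_exp_neg hc hb₀)
  have hfourier_int : Integrable (𝓕 f) := by
    rw [hfourier]
    exact ((integrable_line_cpow_neg hc hb).comp_mul_left' two_pi_pos.ne').mul_const _
  have hcont : ContinuousAt f t := by
    refine ContinuousAt.congr ?_
      (Set.eqOn_indicator.eventuallyEq_of_mem (Ioi_mem_nhds ht)).symm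
    refine ContinuousAt.mul ?_ (by fun_prop)
    exact Complex.continuousAt_ofReal_cpow_const _ _ (Or.inr ht.ne')
  have hinv := hf.fourierInv_fourier_eq hfourier_int hcont
  rw [Real.fourierInv_eq', hfourier] at hinv
  have hsub := Measure.integral_comp_mul_left
    (fun y : ℝ => Complex.exp ((c + y * I) * t) * (c + y * I : ℂ) ^ (-b)) (2 * π)
  have hft : f t = (t : ℂ) ^ (b - 1) * Complex.exp (-(c * t)) := Set.indicator_of_mem ht _
  have hscale : ∫ ξ : ℝ, Complex.exp ((c + (2 * π * ξ : ℝ) * I) * t) *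
      (c + (2 * π * ξ : ℝ) * I : ℂ) ^ (-b) = (t : ℂ) ^ (b - 1) / Complex.Gamma b := by
    rw [eq_div_iff (Complex.Gamma_ne_zero_of_re_pos hb₀), ← integral_mul_const]
    calc _ = Complex.exp (c * t) * f t := by
          rw [← hinv, ← integral_const_mul]
          congr 1 with ξ
          rw [add_mul, Complex.exp_add, smul_eq_mul, Real.inner_apply]
          push_cast
          ring_nf
      _ = (t : ℂ) ^ (b - 1) := by
          rw [hft, mul_left_comm, ← Complex.exp_add, add_neg_cancel, Complex.exp_zero, mul_one]
  rw [hscale, abs_of_pos (inv_pos.2 two_pi_pos), Complex.real_smul] at hsub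
  rw [mul_div_assoc, hsub, Complex.ofReal_inv, Complex.ofReal_mul, Complex.ofReal_ofNat,
    mul_inv_cancel_left₀ (by simp [pi_ne_zero])]

lemma integral_exp_mul_line_cpow_neg_one (hc : 0 < c) {b : ℂ} (hb : 1 < b.re) :
    ∫ y : ℝ, Complex.exp (c + y * I) * (c + y * I : ℂ) ^ (-b) = 2 * π / Complex.Gamma b := by
  simpa using integral_exp_mul_line_cpow_neg hc hb one_pos

end VerticalLine

section Gamma

lemma rpow_mul_exp_neg_le_Gamma {b c : ℝ} (hb : 1 ≤ b) (hc : 0 ≤ c) :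
    c ^ (b - 1) * exp (-c) ≤ Gamma b := by
  have hb₀ : 0 < b := one_pos.trans_le hb
  have hint := GammaIntegral_convergent hb₀
  have hsub : Set.Ioi c ⊆ Set.Ioi 0 := Set.Ioi_subset_Ioi hc
  calc c ^ (b - 1) * exp (-c) = ∫ x in Set.Ioi c, c ^ (b - 1) * exp (-x) := by
        rw [integral_const_mul, integral_exp_neg_Ioi]
    _ ≤ ∫ x in Set.Ioi c, exp (-x) * x ^ (b - 1) := by
        refine setIntegral_mono_on ((integrableOn_exp_neg_Ioi c).const_mul _)
          (hint.mono_set hsub) measurableSet_Ioi fun x (hx : c < x) => ?_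
        rw [mul_comm]
        gcongr
    _ ≤ ∫ x in Set.Ioi 0, exp (-x) * x ^ (b - 1) := by
        refine setIntegral_mono_set hint ?_ hsub.eventuallyLE
        filter_upwards [ae_restrict_mem measurableSet_Ioi] with x (hx : 0 < x)
        exact mul_nonneg (exp_nonneg _) (rpow_nonneg hx.le _)
    _ = Gamma b := (Gamma_eq_integral hb₀).symm

lemma norm_inv_Gamma_le {b c : ℝ} (hb : 1 ≤ b) (hc : 0 < c) :
    ‖(Complex.Gamma b)⁻¹‖ ≤ exp c * c ^ (1 - b) := by
  rw [Complex.Gamma_ofReal, norm_inv, Complex.norm_real,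
    norm_of_nonneg (Gamma_pos_of_pos (one_pos.trans_le hb)).le]
  calc (Gamma b)⁻¹ ≤ (c ^ (b - 1) * exp (-c))⁻¹ :=
        inv_anti₀ (by positivity) (rpow_mul_exp_neg_le_Gamma hb hc.le)
    _ = exp c * c ^ (1 - b) := by
        rw [mul_inv, ← exp_neg, neg_neg, ← rpow_neg hc.le, neg_sub, mul_comm]

end Gamma

section PowerSeries

variable {α : ℝ}

lemma summable_pow_mul_norm_inv_Gamma (hα : 0 < α) (β : ℝ) {R : ℝ} (hR : 0 < R) :
    Summable fun k : ℕ => R ^ k * ‖(Complex.Gamma (((k : ℝ) * α + β : ℝ) : ℂ))⁻¹‖ := by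
  set c : ℝ := (2 * R) ^ α⁻¹
  have hc : 0 < c := by positivity
  have hcα : c ^ α = 2 * R := rpow_inv_rpow (by positivity) hα.ne'
  have hgeom : Summable fun k : ℕ => exp c * c ^ (1 - β) * (1 / 2 : ℝ) ^ k :=
    summable_geometric_two.mul_left _
  refine hgeom.of_norm_bounded_eventually_nat ?_
  filter_upwards [(tendsto_natCast_atTop_atTop.atTop_mul_const hα).eventually_ge_atTop (1 - β)]
    with k hk
  have hpow : c ^ (1 - (k * α + β)) = c ^ (1 - β) * ((2 * R) ^ k)⁻¹ := by
    rw [← hcα, ← rpow_mul_natCast hc.le, ← rpow_neg hc.le, ← rpow_add hc]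
    ring_nf
  calc ‖R ^ k * ‖(Complex.Gamma ((k * α + β : ℝ) : ℂ))⁻¹‖‖
      = R ^ k * ‖(Complex.Gamma ((k * α + β : ℝ) : ℂ))⁻¹‖ := norm_of_nonneg (by positivity)
    _ ≤ R ^ k * (exp c * c ^ (1 - (k * α + β))) := by
        gcongr
        exact norm_inv_Gamma_le (by linarith) hc
    _ = exp c * c ^ (1 - β) * (1 / 2) ^ k := by
        rw [hpow, mul_pow, one_div, inv_pow]
        field_simp

lemma norm_mittagLefflerC_term_le (α β : ℝ) (k : ℕ) {R : ℝ} {w : ℂ} (hw : ‖w‖ ≤ R) :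
    ‖w ^ k / Complex.Gamma (((k : ℝ) * α + β : ℝ) : ℂ)‖
      ≤ R ^ k * ‖(Complex.Gamma (((k : ℝ) * α + β : ℝ) : ℂ))⁻¹‖ := by
  rw [div_eq_mul_inv, norm_mul, norm_pow]
  gcongr

lemma hasSum_mittagLefflerC (hα : 0 < α) (β : ℝ) (z : ℂ) :
    HasSum (fun k : ℕ => z ^ k / Complex.Gamma (((k : ℝ) * α + β : ℝ) : ℂ))
      (mittagLefflerC α β z) :=
  (Summable.of_norm_bounded (summable_pow_mul_norm_inv_Gamma hα β (R := ‖z‖ + 1) (by positivity))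
    fun k => norm_mittagLefflerC_term_le α β k (by simp)).hasSum

lemma differentiable_mittagLefflerC (hα : 0 < α) (β : ℝ) :
    Differentiable ℂ (mittagLefflerC α β) := by
  intro z
  have h : DifferentiableOn ℂ (mittagLefflerC α β) (Metric.ball 0 (‖z‖ + 1)) :=
    Complex.differentiableOn_tsum_of_summable_norm
      (summable_pow_mul_norm_inv_Gamma hα β (by positivity)) (fun k => by fun_prop)
      Metric.isOpen_ball fun k w hw => norm_mittagLefflerC_term_le α β k (mem_ball_zero_iff.1 hw).le
  exact h.differentiableAt (Metric.isOpen_ball.mem_nhds (by simp))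

lemma hasSum_deriv_mittagLefflerC (hα : 0 < α) (β : ℝ) (z : ℂ) :
    HasSum (fun k : ℕ => k * z ^ (k - 1) / Complex.Gamma (((k : ℝ) * α + β : ℝ) : ℂ))
      (deriv (mittagLefflerC α β) z) := by
  have h := Complex.hasSum_deriv_of_summable_norm
    (F := fun (k : ℕ) (z : ℂ) => z ^ k / Complex.Gamma (((k : ℝ) * α + β : ℝ) : ℂ))
    (summable_pow_mul_norm_inv_Gamma hα β (R := ‖z‖ + 1) (by positivity)) (fun k => by fun_prop)
    Metric.isOpen_ball (fun k w hw => norm_mittagLefflerC_term_le α β k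
      (mem_ball_zero_iff.1 hw).le) (z := z) (by simp)
  simp only [deriv_div_const, deriv_pow_field] at h
  exact h

lemma mittagLefflerC_eq_add_deriv (hα : 0 < α) (β : ℝ) (z : ℂ) :
    mittagLefflerC α β z = β * mittagLefflerC α (β + 1) z
      + α * (z * deriv (mittagLefflerC α (β + 1)) z) := by
  have h := ((hasSum_mittagLefflerC hα (β + 1) z).mul_left (β : ℂ)).add
    (((hasSum_deriv_mittagLefflerC hα (β + 1) z).mul_left z).mul_left (α : ℂ))
  refine (hasSum_mittagLefflerC hα β z).unique (h.congr_fun fun k => ?_)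
  have hpow : k * z ^ k = z * (k * z ^ (k - 1)) := by
    rcases k with _ | k
    · simp
    · rw [Nat.add_sub_cancel, pow_succ]; ring
  have hadd : (((k : ℝ) * α + β : ℝ) : ℂ) + 1 = ((k * α + (β + 1) : ℝ) : ℂ) := by
    push_cast; ring
  rw [div_eq_mul_inv, Complex.one_div_Gamma_eq_self_mul_one_div_Gamma_add_one, hadd,
    Complex.ofReal_add (k * α) β, Complex.ofReal_mul, Complex.ofReal_natCast]
  linear_combination (α * (Complex.Gamma ((k * α + (β + 1) : ℝ) : ℂ))⁻¹) * hpow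

end PowerSeries

section IntegralRepresentation

/-- The integrand of the Bromwich integral that inverts the Laplace transform of
`t ↦ t ^ (β - 1) * E_{α,β}(z t ^ α)` at `t = 1`: that transform is `s ^ (α - β) / (s ^ α - z)`,
written here with negative powers of `s` only. -/
noncomputable def mittagLefflerKernel (α β : ℝ) (z s : ℂ) : ℂ :=
  Complex.exp s * s ^ (-(β : ℂ)) / (1 - z * s ^ (-(α : ℂ)))

variable {α β μ c : ℝ} {z s : ℂ}

lemma norm_exp_mul_cpow_neg (s : ℂ) (b : ℝ) :
    ‖Complex.exp s * s ^ (-(b : ℂ))‖ = exp s.re * ‖s‖ ^ (-b) := by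
  rw [norm_mul, Complex.norm_exp, ← Complex.ofReal_neg, Complex.norm_cpow_real]

lemma hasSum_mittagLefflerKernel (β : ℝ) (hs : s ≠ 0) (hz : ‖z‖ * ‖s‖ ^ (-α) < 1) :
    HasSum (fun k : ℕ => z ^ k * (Complex.exp s * s ^ (-((k * α + β : ℝ) : ℂ))))
      (mittagLefflerKernel α β z s) := by
  have hnorm : ‖z * s ^ (-(α : ℂ))‖ < 1 := by
    rwa [norm_mul, ← Complex.ofReal_neg, Complex.norm_cpow_real]
  refine ((hasSum_geometric_of_norm_lt_one hnorm).mul_left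
    (Complex.exp s * s ^ (-(β : ℂ)))).congr_fun fun k => ?_
  have hexp : (-((k * α + β : ℝ) : ℂ)) = -(β : ℂ) + k * -(α : ℂ) := by push_cast; ring
  rw [hexp, Complex.cpow_add _ _ hs, Complex.cpow_nat_mul, mul_pow]
  ring

lemma norm_pow_mul_exp_mul_line_cpow_neg_le (hα : 0 ≤ α) (β : ℝ) (hc : 0 < c) (z : ℂ) (k : ℕ)
    (y : ℝ) :
    ‖z ^ k * (Complex.exp (c + y * I) * (c + y * I : ℂ) ^ (-((k * α + β : ℝ) : ℂ)))‖
      ≤ (‖z‖ * c ^ (-α)) ^ k * (exp c * ‖(c + y * I : ℂ)‖ ^ (-β)) := by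
  have hs : 0 < ‖(c + y * I : ℂ)‖ := hc.trans_le (le_norm_line c y)
  have hpow : ‖(c + y * I : ℂ)‖ ^ (-(k * α + β))
      = (‖(c + y * I : ℂ)‖ ^ (-α)) ^ k * ‖(c + y * I : ℂ)‖ ^ (-β) := by
    rw [← rpow_mul_natCast hs.le, ← rpow_add hs]
    ring_nf
  have hle := norm_line_rpow_neg_le hc hα y
  calc _ = ‖z‖ ^ k * (‖(c + y * I : ℂ)‖ ^ (-α)) ^ k * (exp c * ‖(c + y * I : ℂ)‖ ^ (-β)) := by
        rw [norm_mul, norm_pow, norm_exp_mul_cpow_neg, hpow]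
        simp only [Complex.add_re, Complex.ofReal_re, Complex.re_ofReal_mul, Complex.I_re,
          mul_zero, add_zero]
        ring
    _ ≤ ‖z‖ ^ k * (c ^ (-α)) ^ k * (exp c * ‖(c + y * I : ℂ)‖ ^ (-β)) := by
        gcongr
    _ = _ := by rw [mul_pow]

lemma integral_mittagLefflerKernel_of_norm_lt (hα : 0 < α) (hβ : 1 < β) (hc : 0 < c)
    (hz : ‖z‖ < c ^ α) :
    ∫ y : ℝ, mittagLefflerKernel α β z (c + y * I) = 2 * π * mittagLefflerC α β z := by
  set g : ℕ → ℝ → ℂ := fun k y =>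
    z ^ k * (Complex.exp (c + y * I) * (c + y * I : ℂ) ^ (-((k * α + β : ℝ) : ℂ)))
  have hratio : ‖z‖ * c ^ (-α) < 1 := by
    rwa [rpow_neg hc.le, ← div_eq_mul_inv, div_lt_one (rpow_pos_of_pos hc α)]
  have hbound_int (k : ℕ) : Integrable fun y : ℝ =>
      (‖z‖ * c ^ (-α)) ^ k * (exp c * ‖(c + y * I : ℂ)‖ ^ (-β)) :=
    ((integrable_norm_line_rpow_neg hc hβ).const_mul _).const_mul _
  have hle := norm_pow_mul_exp_mul_line_cpow_neg_le hα.le β hc z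
  have hg_int (k : ℕ) : Integrable (g k) := (hbound_int k).mono'
    (by have := continuous_line_cpow hc (-((k * α + β : ℝ) : ℂ)); fun_prop)
    (Eventually.of_forall (hle k))
  have hg_sum : Summable fun k => ∫ y, ‖g k y‖ := by
    refine Summable.of_nonneg_of_le (fun k => integral_nonneg fun y => norm_nonneg _)
      (fun k => integral_mono (hg_int k).norm (hbound_int k) (hle k)) ?_
    simp_rw [integral_const_mul]
    exact (summable_geometric_of_lt_one (by positivity) hratio).mul_right _
  have hg_eval (k : ℕ) :
      ∫ y, g k y = 2 * π * (z ^ k / Complex.Gamma ((k * α + β : ℝ) : ℂ)) := by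
    have hb : 1 < k * α + β := by nlinarith [k.cast_nonneg (α := ℝ)]
    rw [integral_const_mul, integral_exp_mul_line_cpow_neg_one hc (by simpa using hb)]
    ring
  have hsum := hasSum_integral_of_summable_integral_norm hg_int hg_sum
  simp_rw [hg_eval] at hsum
  rw [← hsum.unique ((hasSum_mittagLefflerC hα β z).mul_left (2 * π : ℂ))]
  congr 1 with y
  have hs : (c + y * I : ℂ) ≠ 0 := norm_pos_iff.1 (hc.trans_le (le_norm_line c y))
  refine (hasSum_mittagLefflerKernel β hs (hratio.trans_le' ?_)).tsum_eq.symm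
  exact mul_le_mul_of_nonneg_left (norm_line_rpow_neg_le hc hα.le y) (norm_nonneg z)

lemma norm_mittagLefflerKernel_le (hα : 0 ≤ α) (β : ℝ) (hμ : π * α / 2 < μ) (hz : μ ≤ |z.arg|)
    (hs : 0 < s.re) :
    ‖mittagLefflerKernel α β z s‖ ≤ exp s.re * ‖s‖ ^ (-β) /
      (sin ((μ - π * α / 2) / 2) * (1 + ‖z‖ * ‖s‖ ^ (-α))) := by
  have hsin := sin_half_sub_pos (by positivity) hμ hz
  rw [mittagLefflerKernel, norm_div, norm_exp_mul_cpow_neg]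
  gcongr
  exact sin_half_mul_one_add_le_norm_one_sub_mul_cpow hα hμ.le hz hs

lemma norm_mittagLefflerKernel_mul_norm_le (hα : 0 ≤ α) (β : ℝ) (hμ : π * α / 2 < μ)
    (hz : μ ≤ |z.arg|) (hs : 0 < s.re) :
    ‖mittagLefflerKernel α β z s‖ * ‖z‖ ≤
      exp s.re / sin ((μ - π * α / 2) / 2) * ‖s‖ ^ (-(β - α)) := by
  have hsin := sin_half_sub_pos (by positivity) hμ hz
  have hs₀ : 0 < ‖s‖ := hs.trans_le (Complex.re_le_norm s)
  have hpow : ‖s‖ ^ (-β) = ‖s‖ ^ (-(β - α)) * ‖s‖ ^ (-α) := by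
    rw [← rpow_add hs₀]
    ring_nf
  refine (mul_le_mul_of_nonneg_right (norm_mittagLefflerKernel_le hα β hμ hz hs)
    (norm_nonneg z)).trans ?_
  rw [div_mul_eq_mul_div, div_le_iff₀ (by positivity)]
  calc exp s.re * ‖s‖ ^ (-β) * ‖z‖ = exp s.re * ‖s‖ ^ (-(β - α)) * (‖z‖ * ‖s‖ ^ (-α)) := by
        rw [hpow]
        ring
    _ ≤ exp s.re * ‖s‖ ^ (-(β - α)) * (1 + ‖z‖ * ‖s‖ ^ (-α)) := by
        gcongr
        exact le_add_of_nonneg_left zero_le_one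
    _ = _ := by
        rw [div_mul_eq_mul_div, div_mul_eq_mul_div, eq_div_iff hsin.ne']
        ring

lemma one_sub_mul_cpow_ne_zero (hα : 0 ≤ α) (hz : π * α / 2 < |z.arg|) (hs : 0 < s.re) :
    1 - z * s ^ (-(α : ℂ)) ≠ 0 := by
  have hsin := sin_half_sub_pos (by positivity) hz le_rfl
  exact norm_pos_iff.1 ((by positivity : (0 : ℝ) < _).trans_le
    (sin_half_mul_one_add_le_norm_one_sub_mul_cpow hα hz.le le_rfl hs))

lemma aestronglyMeasurable_mittagLefflerKernel_line (α β : ℝ) (hc : 0 < c) (z : ℂ) :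
    AEStronglyMeasurable fun y : ℝ => mittagLefflerKernel α β z (c + y * I) := by
  have hexp : Measurable fun y : ℝ => Complex.exp (c + y * I) := by fun_prop
  have hcpow (b : ℂ) : Measurable fun y : ℝ => (c + y * I : ℂ) ^ b :=
    (continuous_line_cpow hc b).measurable
  exact ((hexp.mul (hcpow _)).div (((hcpow _).const_mul z).const_sub 1)).aestronglyMeasurable

lemma differentiableOn_integral_mittagLefflerKernel (hα : 0 ≤ α) (hβ : 1 < β) (hc : 0 < c) :
    DifferentiableOn ℂ (fun z => ∫ y : ℝ, mittagLefflerKernel α β z (c + y * I))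
      {z | π * α / 2 < |z.arg|} := by
  intro z hz
  obtain ⟨ν, hν, hνz⟩ : ∃ ν, π * α / 2 < ν ∧ ν < |z.arg| := exists_between hz
  have hA : 0 ≤ π * α / 2 := by positivity
  have hU : IsOpen {w : ℂ | ν < |w.arg|} := isOpen_setOf_lt_abs_arg (hA.trans hν.le)
  have hre (y : ℝ) : 0 < (c + y * I : ℂ).re := by simpa using hc
  have hsin := sin_half_sub_pos hA hν hνz.le
  refine (DifferentiableOn.differentiableAt ?_ (hU.mem_nhds hνz)).differentiableWithinAt
  refine differentiableOn_integral_of_norm_le hU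
    (fun w _ => aestronglyMeasurable_mittagLefflerKernel_line α β hc w)
    (Eventually.of_forall fun y w hw => ?_)
    (bound := fun y => exp c * ‖(c + y * I : ℂ)‖ ^ (-β) / sin ((ν - π * α / 2) / 2))
    (Eventually.of_forall fun y w (hw : ν < |w.arg|) => ?_)
    (((integrable_norm_line_rpow_neg hc hβ).const_mul _).div_const _)
  · have := one_sub_mul_cpow_ne_zero hα (hν.trans hw) (hre y)
    unfold mittagLefflerKernel
    fun_prop (disch := assumption)
  · refine (norm_mittagLefflerKernel_le hα β hν hw.le (hre y)).trans ?_
    simp only [Complex.add_re, Complex.ofReal_re, Complex.re_ofReal_mul, Complex.I_re,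
      mul_zero, add_zero]
    gcongr
    exact le_mul_of_one_le_right hsin.le (le_add_of_nonneg_right (by positivity))

lemma integral_mittagLefflerKernel (hα : 0 < α) (hβ : 1 < β) (hc : 0 < c)
    (hz : π * α / 2 < |z.arg|) :
    ∫ y : ℝ, mittagLefflerKernel α β z (c + y * I) = 2 * π * mittagLefflerC α β z := by
  have hA : 0 ≤ π * α / 2 := by positivity
  have hU : IsOpen {z : ℂ | π * α / 2 < |z.arg|} := isOpen_setOf_lt_abs_arg hA
  have hcα : 0 < c ^ α := rpow_pos_of_pos hc α
  have hbase : |((-(c ^ α / 2) : ℝ) : ℂ).arg| = π := by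
    rw [Complex.arg_ofReal_of_neg (by linarith), abs_of_pos pi_pos]
  refine ((differentiableOn_integral_mittagLefflerKernel hα.le hβ hc).analyticOnNhd
    hU).eqOn_of_preconnected_of_eventuallyEq
    (((differentiable_mittagLefflerC hα β).const_mul _).differentiableOn.analyticOnNhd hU)
    (isPreconnected_setOf_lt_abs_arg hA) (z₀ := ((-(c ^ α / 2) : ℝ) : ℂ)) ?_ ?_ hz
  · exact hbase.symm ▸ hz.trans_le (Complex.abs_arg_le_pi z)
  · have hball : Metric.ball (0 : ℂ) (c ^ α) ∈ 𝓝 ((-(c ^ α / 2) : ℝ) : ℂ) :=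
      Metric.isOpen_ball.mem_nhds (by
        rw [mem_ball_zero_iff, Complex.norm_real, norm_neg, norm_of_nonneg (by positivity)]
        linarith)
    filter_upwards [hball] with w hw
    exact integral_mittagLefflerKernel_of_norm_lt hα hβ hc (mem_ball_zero_iff.1 hw)

end IntegralRepresentation

section Bounds

variable {α β μ : ℝ}

lemma exists_norm_mittagLefflerC_mul_norm_le_of_add_one_lt (hα : 0 < α) (hβ : α + 1 < β)
    (hμ : π * α / 2 < μ) :
    ∃ C : ℝ, ∀ z : ℂ, μ ≤ |z.arg| → ‖mittagLefflerC α β z‖ * ‖z‖ ≤ C := by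
  refine ⟨(2 * π)⁻¹ * ∫ y : ℝ, exp 1 / sin ((μ - π * α / 2) / 2) *
    ‖((1 : ℝ) + y * I : ℂ)‖ ^ (-(β - α)), fun z hz => ?_⟩
  have hrepr := integral_mittagLefflerKernel (β := β) hα (by linarith) one_pos (hμ.trans_le hz)
  rw [le_inv_mul_iff₀ two_pi_pos]
  calc 2 * π * (‖mittagLefflerC α β z‖ * ‖z‖)
      = ‖∫ y : ℝ, mittagLefflerKernel α β z ((1 : ℝ) + y * I) * z‖ := by
        rw [integral_mul_const, hrepr, norm_mul, norm_mul, norm_mul, Complex.norm_ofNat,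
          Complex.norm_real, norm_of_nonneg pi_nonneg, ← mul_assoc]
    _ ≤ _ := by
        refine norm_integral_le_of_norm_le ((integrable_norm_line_rpow_neg one_pos
          (by linarith)).const_mul _) (Eventually.of_forall fun y => ?_)
        have hre : ((1 : ℝ) + y * I : ℂ).re = 1 := by simp
        have h := norm_mittagLefflerKernel_mul_norm_le hα.le β hμ hz (hre.symm ▸ one_pos)
        rwa [hre, ← norm_mul] at h

lemma exists_norm_deriv_mul_sq_norm_le {E : Type*} [NormedAddCommGroup E] [NormedSpace ℂ E]
    {f : ℂ → E} {A B C : ℝ} (hA : 0 ≤ A) (hAB : A < B)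
    (hf : DifferentiableOn ℂ f {z | A < |z.arg|})
    (hC : ∀ z : ℂ, A < |z.arg| → ‖f z‖ * ‖z‖ ≤ C) :
    ∃ C' : ℝ, ∀ z : ℂ, B ≤ |z.arg| → ‖deriv f z‖ * ‖z‖ ^ 2 ≤ C' := by
  obtain ⟨c, hc, hsector⟩ := exists_forall_norm_sub_le_imp_lt_abs_arg hA hAB
  have hr : 0 < min c (1 / 2) := lt_min hc one_half_pos
  refine ⟨2 * C / min c (1 / 2), fun z hz => ?_⟩
  have hz₀ : 0 < ‖z‖ := norm_pos_iff.2 (ne_zero_of_lt_abs_arg hA (hAB.trans_le hz))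
  have hball : Metric.closedBall z (min c (1 / 2) * ‖z‖) ⊆ {w | A < |w.arg|} := fun w hw =>
    hsector z w hz ((mem_closedBall_iff_norm.1 hw).trans (by gcongr; exact min_le_left _ _))
  have hsphere : ∀ w ∈ Metric.sphere z (min c (1 / 2) * ‖z‖), ‖f w‖ ≤ 2 * C / ‖z‖ := by
    intro w hw
    have hw' : ‖w - z‖ ≤ 1 / 2 * ‖z‖ := (mem_sphere_iff_norm.1 hw).le.trans
      (by gcongr; exact min_le_right _ _)
    have hwz : ‖z‖ ≤ 2 * ‖w‖ := by linarith [norm_sub_norm_le z w, norm_sub_rev w z]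
    rw [le_div_iff₀ hz₀]
    calc ‖f w‖ * ‖z‖ ≤ ‖f w‖ * (2 * ‖w‖) := by gcongr
      _ = 2 * (‖f w‖ * ‖w‖) := by ring
      _ ≤ 2 * C := by gcongr; exact hC w (hball (Metric.sphere_subset_closedBall hw))
  calc ‖deriv f z‖ * ‖z‖ ^ 2 ≤ 2 * C / ‖z‖ / (min c (1 / 2) * ‖z‖) * ‖z‖ ^ 2 := by
        gcongr
        exact Complex.norm_deriv_le_of_forall_mem_sphere_norm_le (mul_pos hr hz₀)
          (hf.diffContOnCl_ball hball) hsphere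
    _ = 2 * C / min c (1 / 2) := by field_simp

lemma exists_norm_mittagLefflerC_mul_norm_le_of_add_one {A B C : ℝ} (hα : 0 < α) (hA : 0 ≤ A)
    (hAB : A < B) (hC : ∀ z : ℂ, A ≤ |z.arg| → ‖mittagLefflerC α (β + 1) z‖ * ‖z‖ ≤ C) :
    ∃ C' : ℝ, ∀ z : ℂ, B ≤ |z.arg| → ‖mittagLefflerC α β z‖ * ‖z‖ ≤ C' := by
  obtain ⟨D, hD⟩ := exists_norm_deriv_mul_sq_norm_le hA hAB
    (differentiable_mittagLefflerC hα (β + 1)).differentiableOn fun z hz => hC z hz.le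
  refine ⟨|β| * C + α * D, fun z hz => ?_⟩
  calc ‖mittagLefflerC α β z‖ * ‖z‖
      ≤ (‖β * mittagLefflerC α (β + 1) z‖
          + ‖α * (z * deriv (mittagLefflerC α (β + 1)) z)‖) * ‖z‖ := by
        rw [mittagLefflerC_eq_add_deriv hα]
        gcongr
        exact norm_add_le _ _
    _ = |β| * (‖mittagLefflerC α (β + 1) z‖ * ‖z‖)
          + α * (‖deriv (mittagLefflerC α (β + 1)) z‖ * ‖z‖ ^ 2) := by
        rw [norm_mul, norm_mul, norm_mul, Complex.norm_real, Complex.norm_real, norm_eq_abs,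
          norm_of_nonneg hα.le]
        ring
    _ ≤ |β| * C + α * D := by
        gcongr
        exacts [hC z (hAB.le.trans hz), hD z hz]

lemma exists_norm_mittagLefflerC_mul_norm_le_of_lt_add_natCast (hα : 0 < α) (n : ℕ)
    (hβ : α + 1 < β + n) (hμ : π * α / 2 < μ) :
    ∃ C : ℝ, ∀ z : ℂ, μ ≤ |z.arg| → ‖mittagLefflerC α β z‖ * ‖z‖ ≤ C := by
  induction n generalizing β μ with
  | zero =>
    exact exists_norm_mittagLefflerC_mul_norm_le_of_add_one_lt hα (by simpa using hβ) hμ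
  | succ n ih =>
    obtain ⟨ν, hν, hνμ⟩ := exists_between hμ
    obtain ⟨C, hC⟩ := ih (β := β + 1) (by push_cast at hβ; linarith) hν
    exact exists_norm_mittagLefflerC_mul_norm_le_of_add_one hα
      ((by positivity : 0 ≤ π * α / 2).trans hν.le) hνμ hC

end Bounds

theorem mittagLefflerC_bound_general {α μ : ℝ} (β : ℝ) (hα : 0 < α) (hμ : π * α / 2 < μ) :
    ∃ C : ℝ, 0 < C ∧ ∀ z : ℂ, μ ≤ |z.arg| → ‖mittagLefflerC α β z‖ ≤ C / (1 + ‖z‖) := by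
  obtain ⟨n, hn⟩ := exists_nat_gt (α + 1 - β)
  obtain ⟨C, hC⟩ :=
    exists_norm_mittagLefflerC_mul_norm_le_of_lt_add_natCast hα n (sub_lt_iff_lt_add'.1 hn) hμ
  obtain ⟨D, hD⟩ := (isCompact_closedBall (0 : ℂ) 1).exists_bound_of_continuousOn
    (differentiable_mittagLefflerC hα β).continuous.continuousOn
  refine ⟨max C D + |C| + 1, ?_, fun z hz => ?_⟩
  · linarith [le_max_right C D, abs_nonneg C, (norm_nonneg _).trans (hD 0 (by simp))]
  rw [le_div_iff₀ (by positivity), mul_one_add]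
  have hle : ‖mittagLefflerC α β z‖ ≤ max C D := by
    rcases le_total ‖z‖ 1 with hz₁ | hz₁
    · exact (hD z (by simpa using hz₁)).trans (le_max_right _ _)
    · exact (le_mul_of_one_le_right (norm_nonneg _) hz₁).trans ((hC z hz).trans (le_max_left _ _))
  linarith [hC z hz, le_abs_self C]

theorem mittagLefflerC_bound (α β μ : ℝ) (hα0 : 0 < α) (hα2 : α < 2)
    (hμ1 : Real.pi * α / 2 < μ) (hμ2 : μ < min Real.pi (Real.pi * α)) :
    ∃ C : ℝ, 0 < C ∧ ∀ z : ℂ, μ ≤ |z.arg| → |z.arg| ≤ Real.pi →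
      ‖mittagLefflerC α β z‖ ≤ C / (1 + ‖z‖) := by
  obtain ⟨C, hC₀, hC⟩ := mittagLefflerC_bound_general β hα0 hμ1
  exact ⟨C, hC₀, fun z hz _ => hC z hz⟩
end

section
/- For 0 < α ≤ 1, the function x ↦ E_{α,1}(-x) is completely monotonic on [0, ∞): for every natural number n and every x > 0, (-1)^n times the n-th derivative of x ↦ E_{α,1}(-x) evaluated at x is nonnegative, and E_{α,1}(-x) ≥ 0 for all x ≥ 0. -/
open Real

/-- The two-parameter Mittag-Leffler function (real arguments),
with the convention `1/Γ = 0` at the poles of `Γ` (as in Mathlib's `Real.Gamma`). -/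
noncomputable def mittagLeffler (α β x : ℝ) : ℝ :=
  ∑' k : ℕ, x ^ k / Real.Gamma ((k : ℝ) * α + β)

/-! Write `E_{α,β}(x) = ∑ m_k x ^ k / k!` with `m_k = k! / Γ(kα + β)`. By Euler's limit formula for
`Γ`, `m_k` is the limit of `n ^ (1 - β) * (n ^ (1 - α)) ^ k * ∏_{j ≤ n} (kα + β + j) / (k + 1 + j)`.
For `0 < α ≤ 1` and `α ≤ β` each factor is `α + c_j / (k + 1 + j)` with `c_j ≥ 0`, the `k`-th moment
of a measure on `[0, 1]`, so the functional `L : s ^ k ↦ m_k` is nonnegative on the polynomials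
which are nonnegative on `[0, ∞)`. The `n`-th derivative of `E_{α,β}` at `x` is formally
`L (s ^ n * exp (x * s))`, and `exp (x * s)` is the limit of `(1 + x * s / N) ^ N` along even `N`.
-/

open Filter MeasureTheory Polynomial Topology
open scoped Nat

/-- The linear functional `X ^ k ↦ m k` on real polynomials attached to a sequence `m`, i.e.
integration against `μ` when `m` is the moment sequence of a measure `μ`. -/
noncomputable def momentFunctional (m : ℕ → ℝ) : ℝ[X] →ₗ[ℝ] ℝ :=
  Polynomial.lsum fun k ↦ m k • LinearMap.id

lemma momentFunctional_apply (m : ℕ → ℝ) (p : ℝ[X]) :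
    momentFunctional m p = p.sum fun k a ↦ a * m k := by
  simp [momentFunctional, mul_comm]

lemma momentFunctional_monomial (m : ℕ → ℝ) (k : ℕ) (a : ℝ) :
    momentFunctional m (monomial k a) = a * m k := by
  simp [momentFunctional_apply]

lemma momentFunctional_eq_tsum (m : ℕ → ℝ) (p : ℝ[X]) :
    momentFunctional m p = ∑' k, p.coeff k * m k := by
  rw [momentFunctional_apply, sum_def, tsum_eq_sum fun k hk ↦ ?_]
  rw [notMem_support_iff.mp hk, zero_mul]

lemma momentFunctional_shift (m : ℕ → ℝ) (n : ℕ) (p : ℝ[X]) :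
    momentFunctional (fun k ↦ m (k + n)) p = momentFunctional m (p * X ^ n) := by
  induction p using Polynomial.induction_on' with
  | add p q hp hq => rw [map_add, hp, hq, add_mul, map_add]
  | monomial k a => rw [monomial_mul_X_pow, momentFunctional_monomial, momentFunctional_monomial]

lemma momentFunctional_mul_pow (m : ℕ → ℝ) (c : ℝ) (p : ℝ[X]) :
    momentFunctional (fun k ↦ m k * c ^ k) p = momentFunctional m (p.comp (C c * X)) := by
  simp only [momentFunctional_eq_tsum, comp_C_mul_X_coeff]
  exact tsum_congr fun k ↦ by ring

lemma momentFunctional_mul (m m' : ℕ → ℝ) (p : ℝ[X]) :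
    momentFunctional (m * m') p =
      momentFunctional m' (p.sum fun k a ↦ monomial k (a * m k)) := by
  simp only [momentFunctional_apply (m * m'), sum_def, map_sum, momentFunctional_monomial,
    Pi.mul_apply, mul_assoc]

/-- Nonnegativity of the moment functional on the polynomials that are nonnegative on `[0, ∞)`.
By the Riesz–Haviland theorem this says that `m` is the moment sequence of a measure on `[0, ∞)`;
the present form makes the closure under pointwise limits evident. -/
def IsStieltjesPositive (m : ℕ → ℝ) : Prop :=
  ∀ p : ℝ[X], (∀ s, 0 ≤ s → 0 ≤ p.eval s) → 0 ≤ momentFunctional m p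

namespace IsStieltjesPositive

variable {m m' : ℕ → ℝ}

lemma of_tendsto {ι : Type*} {l : Filter ι} [l.NeBot] {u : ι → ℕ → ℝ}
    (hu : ∀ i, IsStieltjesPositive (u i)) (hm : Tendsto u l (𝓝 m)) : IsStieltjesPositive m := by
  intro p hp
  have h : Tendsto (fun i ↦ momentFunctional (u i) p) l (𝓝 (momentFunctional m p)) := by
    simp only [momentFunctional_apply, sum_def]
    exact tendsto_finsetSum _ fun k _ ↦ (tendsto_pi_nhds.1 hm k).const_mul _
  exact ge_of_tendsto' h fun i ↦ hu i p hp

lemma add (hm : IsStieltjesPositive m) (hm' : IsStieltjesPositive m') :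
    IsStieltjesPositive (m + m') := by
  intro p hp
  have h := add_nonneg (hm p hp) (hm' p hp)
  simpa only [momentFunctional_apply, sum_def, Pi.add_apply, mul_add, Finset.sum_add_distrib]
    using h

lemma smul (hm : IsStieltjesPositive m) {c : ℝ} (hc : 0 ≤ c) : IsStieltjesPositive (c • m) := by
  intro p hp
  have h := mul_nonneg hc (hm p hp)
  simpa only [momentFunctional_apply, sum_def, Pi.smul_apply, smul_eq_mul, mul_left_comm,
    Finset.mul_sum] using h

lemma shift (hm : IsStieltjesPositive m) (n : ℕ) : IsStieltjesPositive fun k ↦ m (k + n) := by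
  intro p hp
  rw [momentFunctional_shift]
  refine hm _ fun s hs ↦ ?_
  rw [eval_mul, eval_pow, eval_X]
  exact mul_nonneg (hp s hs) (pow_nonneg hs n)

lemma mul_pow (hm : IsStieltjesPositive m) {c : ℝ} (hc : 0 ≤ c) :
    IsStieltjesPositive fun k ↦ m k * c ^ k := by
  intro p hp
  rw [momentFunctional_mul_pow]
  refine hm _ fun s hs ↦ ?_
  rw [eval_comp, eval_mul, eval_C, eval_X]
  exact hp _ (mul_nonneg hc hs)

lemma mul (hm : IsStieltjesPositive m) (hm' : IsStieltjesPositive m') :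
    IsStieltjesPositive (m * m') := by
  intro p hp
  -- Apply the two functionals to `p (s * t)`, first in `s`, then in `t`.
  rw [momentFunctional_mul]
  refine hm' _ fun t ht ↦ ?_
  have h := hm.mul_pow ht p hp
  simpa only [momentFunctional_apply, sum_def, eval_finsetSum, eval_monomial, mul_assoc] using h

lemma integral_pow {μ : Measure ℝ} (hμ : ∀ᵐ s ∂μ, 0 ≤ s)
    (hint : ∀ k : ℕ, Integrable (fun s ↦ s ^ k) μ) :
    IsStieltjesPositive fun k ↦ ∫ s, s ^ k ∂μ := by
  intro p hp
  have h : momentFunctional (fun k ↦ ∫ s, s ^ k ∂μ) p = ∫ s, p.eval s ∂μ := by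
    simp only [momentFunctional_apply, eval_eq_sum, sum_def, ← integral_const_mul]
    exact (integral_finsetSum _ fun k _ ↦ (hint k).const_mul _).symm
  rw [h]
  exact integral_nonneg_of_ae (hμ.mono fun s hs ↦ hp s hs)

lemma one : IsStieltjesPositive 1 := by
  intro p hp
  have h : momentFunctional 1 p = p.eval 1 := by
    simp [momentFunctional_apply, eval_eq_sum]
  exact h ▸ hp 1 zero_le_one

lemma prod {ι : Type*} {s : Finset ι} {u : ι → ℕ → ℝ}
    (hu : ∀ i ∈ s, IsStieltjesPositive (u i)) : IsStieltjesPositive (∏ i ∈ s, u i) :=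
  Finset.prod_induction _ _ (fun _ _ ↦ mul) one hu

lemma inv_add_one : IsStieltjesPositive fun k ↦ ((k : ℝ) + 1)⁻¹ := by
  have h : (fun k : ℕ ↦ ((k : ℝ) + 1)⁻¹) = fun k ↦ ∫ s in Set.Ioc (0 : ℝ) 1, s ^ k := by
    funext k
    simp [← intervalIntegral.integral_of_le]
  rw [h]
  refine integral_pow ?_ fun k ↦ (continuous_pow k).integrableOn_Ioc
  filter_upwards [ae_restrict_mem measurableSet_Ioc] with s hs using hs.1.le

lemma affine_div_affine {α β : ℝ} (hα0 : 0 ≤ α) (hα1 : α ≤ 1) (hβ : α ≤ β) (j : ℕ) :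
    IsStieltjesPositive fun k ↦ (k * α + β + j) / (k + 1 + j) := by
  have hc : 0 ≤ β - α + j * (1 - α) :=
    add_nonneg (sub_nonneg.2 hβ) (mul_nonneg j.cast_nonneg (sub_nonneg.2 hα1))
  -- The quotient equals `α + (β - α + j * (1 - α)) / (k + 1 + j)`.
  convert (one.smul hα0).add ((inv_add_one.shift j).smul hc) using 2 with k
  have hk : (k : ℝ) + 1 + j ≠ 0 := by positivity
  simp only [Pi.add_apply, Pi.smul_apply, Pi.one_apply, smul_eq_mul, Nat.cast_add,
    add_right_comm _ (j : ℝ) 1]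
  field_simp
  ring

end IsStieltjesPositive

/-- The exponential generating function of the sequence `m`. -/
noncomputable def expGenFun (m : ℕ → ℝ) (x : ℝ) : ℝ :=
  ∑' k : ℕ, m k * (x ^ k / k !)

section ExpGenFun

variable {m : ℕ → ℝ}

lemma summable_expGenFun_shift (hm : ∀ x : ℝ, Summable fun k : ℕ ↦ m k * (x ^ k / k !))
    (n : ℕ) (x : ℝ) : Summable fun k : ℕ ↦ m (k + n) * (x ^ k / k !) := by
  induction n generalizing x with
  | zero => exact hm x
  | succ n ih =>
    have hsum := ((summable_nat_add_iff 1).2 (ih (2 * (|x| + 1)))).abs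
    refine Summable.of_norm_bounded hsum fun k ↦ ?_
    have hpow : |x| ^ k * (k + 1) ≤ (2 * (|x| + 1)) ^ (k + 1) := by
      calc |x| ^ k * (k + 1)
          ≤ (|x| + 1) ^ (k + 1) * 2 ^ (k + 1) := by
            gcongr ?_ * ?_
            · exact (pow_le_pow_left₀ (abs_nonneg x) (by linarith) k).trans
                (pow_le_pow_right₀ (by linarith [abs_nonneg x]) k.le_succ)
            · exact_mod_cast (Nat.lt_two_pow_self (n := k + 1)).le
        _ = (2 * (|x| + 1)) ^ (k + 1) := by rw [mul_comm, mul_pow]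
    have hterm : |x| ^ k / k ! ≤ (2 * (|x| + 1)) ^ (k + 1) / (k + 1)! := by
      rw [Nat.factorial_succ, div_le_div_iff₀ (by positivity) (by positivity)]
      push_cast
      rw [← mul_assoc]
      gcongr
    rw [Real.norm_eq_abs, abs_mul, abs_mul, abs_div, abs_pow, Nat.abs_cast,
      abs_of_nonneg (by positivity : 0 ≤ (2 * (|x| + 1)) ^ (k + 1) / ((k + 1)! : ℝ)),
      Nat.add_right_comm, add_assoc k]
    gcongr

lemma hasDerivAt_pow_div_factorial (k : ℕ) (x : ℝ) :
    HasDerivAt (fun y : ℝ ↦ y ^ (k + 1) / (k + 1)!) (x ^ k / k !) x := by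
  refine ((hasDerivAt_pow (k + 1) x).div_const ((k + 1)! : ℝ)).congr_deriv ?_
  rw [Nat.factorial_succ, Nat.add_sub_cancel, Nat.cast_mul, mul_div_mul_left _ _ (by positivity)]

lemma hasDerivAt_expGenFun (hm : ∀ x : ℝ, Summable fun k : ℕ ↦ m k * (x ^ k / k !))
    (x : ℝ) : HasDerivAt (expGenFun m) (expGenFun (fun k ↦ m (k + 1)) x) x := by
  have hsplit : expGenFun m = fun y ↦ m 0 + ∑' k : ℕ, m (k + 1) * (y ^ (k + 1) / (k + 1)!) := by
    funext y
    simp [expGenFun, (hm y).tsum_eq_zero_add]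
  rw [hsplit]
  have hx : x ∈ Metric.ball (0 : ℝ) (|x| + 1) := by simp
  refine (hasDerivAt_tsum_of_isPreconnected (summable_expGenFun_shift hm 1 (|x| + 1)).abs
    Metric.isOpen_ball (convex_ball _ _).isPreconnected
    (fun k y _ ↦ (hasDerivAt_pow_div_factorial k y).const_mul _) (fun k y hy ↦ ?_) hx
    ((summable_nat_add_iff 1).2 (hm x)) hx).const_add (m 0)
  have hy' : |y| ≤ |(|x| + 1)| := by
    simpa using (mem_ball_zero_iff.1 hy).le.trans (le_abs_self _)
  simp only [norm_mul, norm_div, norm_pow, Real.norm_eq_abs, abs_mul, abs_div, abs_pow]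
  gcongr

lemma iteratedDeriv_expGenFun (hm : ∀ x : ℝ, Summable fun k : ℕ ↦ m k * (x ^ k / k !)) (n : ℕ) :
    iteratedDeriv n (expGenFun m) = expGenFun fun k ↦ m (k + n) := by
  induction n with
  | zero => rw [iteratedDeriv_zero]; rfl
  | succ n ih =>
    rw [iteratedDeriv_succ, ih]
    funext x
    rw [(hasDerivAt_expGenFun (summable_expGenFun_shift hm n) x).deriv]
    simp only [add_assoc, add_comm 1 n]

lemma tendsto_momentFunctional_one_add_pow {x : ℝ}
    (hm : Summable fun k : ℕ ↦ m k * (x ^ k / k !)) :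
    Tendsto (fun N : ℕ ↦ momentFunctional m (((1 + X) ^ N).comp (C (x / N) * X))) atTop
      (𝓝 (expGenFun m x)) := by
  simp only [momentFunctional_eq_tsum, comp_C_mul_X_coeff, coeff_one_add_X_pow, expGenFun]
  have hx : Tendsto (fun N : ℕ ↦ (N : ℝ) * (x / N)) atTop (𝓝 x) :=
    tendsto_const_nhds.congr' <| (eventually_ne_atTop 0).mono fun N hN ↦
      (mul_div_cancel₀ x (Nat.cast_ne_zero.2 hN)).symm
  refine tendsto_tsum_of_dominated_convergence hm.abs (fun k ↦ ?_) ?_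
  · simpa only [mul_comm (m k)] using
      (ProbabilityTheory.tendsto_choose_mul_pow_atTop k hx).mul_const (m k)
  · filter_upwards [eventually_ne_atTop 0] with N hN k
    have hcoeff : N.choose k * |x / N| ^ k ≤ |x| ^ k / k ! :=
      calc N.choose k * |x / N| ^ k ≤ (N : ℝ) ^ k / k ! * |x / N| ^ k := by
            gcongr
            exact Nat.choose_le_pow_div k N
        _ = |x| ^ k / k ! := by
            rw [abs_div, Nat.abs_cast, div_pow]
            field_simp
    rw [abs_mul, abs_div, abs_pow, Nat.abs_cast, norm_mul, norm_mul, norm_pow, norm_natCast,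
      Real.norm_eq_abs, Real.norm_eq_abs, mul_comm |m k|]
    gcongr

lemma IsStieltjesPositive.expGenFun_nonneg (hpos : IsStieltjesPositive m) {x : ℝ}
    (hm : Summable fun k : ℕ ↦ m k * (x ^ k / k !)) : 0 ≤ expGenFun m x := by
  refine ge_of_tendsto_of_frequently (tendsto_momentFunctional_one_add_pow hm) ?_
  refine Nat.frequently_even.mono fun N hN ↦ hpos _ fun s _ ↦ ?_
  rw [eval_comp, eval_pow]
  exact hN.pow_nonneg _

end ExpGenFun

lemma tendsto_rpow_mul_prod_div_Gamma (s : ℝ) {t : ℝ} (ht : Gamma t ≠ 0) :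
    Tendsto (fun n : ℕ ↦ (n : ℝ) ^ (s - t) * ∏ j ∈ Finset.range (n + 1), (t + j) / (s + j)) atTop
      (𝓝 (Gamma s / Gamma t)) := by
  refine ((GammaSeq_tendsto_Gamma s).div (GammaSeq_tendsto_Gamma t) ht).congr' ?_
  filter_upwards [eventually_gt_atTop 0] with n hn
  have hfact : (n ! : ℝ) ≠ 0 := by positivity
  rw [Pi.div_apply, GammaSeq, GammaSeq, Finset.prod_div_distrib, rpow_sub (Nat.cast_pos.2 hn)]
  field

lemma rpow_mul_exp_neg_le_Gamma_s4 {M s : ℝ} (hM : 0 ≤ M) (hs : 1 ≤ s) :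
    M ^ (s - 1) * exp (-M) ≤ Gamma s := by
  have hint := GammaIntegral_convergent (zero_lt_one.trans_le hs)
  have hsub : Set.Ioi M ⊆ Set.Ioi 0 := Set.Ioi_subset_Ioi hM
  calc M ^ (s - 1) * exp (-M) = ∫ t in Set.Ioi M, exp (-t) * M ^ (s - 1) := by
        rw [integral_mul_const, integral_exp_neg_Ioi, mul_comm]
    _ ≤ ∫ t in Set.Ioi M, exp (-t) * t ^ (s - 1) := by
        refine setIntegral_mono_on ((integrableOn_exp_neg_Ioi M).mul_const _)
          (hint.mono_set hsub) measurableSet_Ioi fun t (ht : M < t) ↦ ?_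
        gcongr
    _ ≤ ∫ t in Set.Ioi 0, exp (-t) * t ^ (s - 1) := by
        refine setIntegral_mono_set hint ?_ hsub.eventuallyLE
        filter_upwards [ae_restrict_mem measurableSet_Ioi] with t (ht : 0 < t)
        exact mul_nonneg (exp_nonneg _) (rpow_nonneg ht.le _)
    _ = Gamma s := (Gamma_eq_integral (zero_lt_one.trans_le hs)).symm

lemma summable_mittagLeffler {α : ℝ} (hα : 0 < α) (β x : ℝ) :
    Summable fun k : ℕ ↦ x ^ k / Gamma (k * α + β) := by
  set r : ℝ := |x| + 1
  have hr0 : 0 < r := by positivity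
  set M : ℝ := r ^ α⁻¹ with hM
  have hM0 : 0 < M := by positivity
  have hMpow (k : ℕ) : M ^ (k * α + β - 1) = r ^ k * M ^ (β - 1) := by
    rw [add_sub_assoc, rpow_add hM0, mul_comm (k : ℝ), rpow_mul hM0.le, hM,
      rpow_inv_rpow hr0.le hα.ne', rpow_natCast]
  have hgeom : Summable fun k : ℕ ↦ (|x| / r) ^ k * (M ^ (β - 1) * exp (-M))⁻¹ :=
    (summable_geometric_of_lt_one (by positivity)
      ((div_lt_one hr0).2 (lt_add_one _))).mul_right _
  refine hgeom.of_norm_bounded_eventually_nat ?_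
  have hlarge : ∀ᶠ k : ℕ in atTop, 1 ≤ k * α + β :=
    (tendsto_atTop_add_const_right _ β
      (tendsto_natCast_atTop_atTop.atTop_mul_const hα)).eventually_ge_atTop 1
  filter_upwards [hlarge] with k hk
  have hGamma := rpow_mul_exp_neg_le_Gamma_s4 hM0.le hk
  rw [hMpow] at hGamma
  rw [norm_div, norm_pow, Real.norm_eq_abs, Real.norm_eq_abs,
    abs_of_pos (Gamma_pos_of_pos (zero_lt_one.trans_le hk))]
  calc |x| ^ k / Gamma (k * α + β) ≤ |x| ^ k / (r ^ k * M ^ (β - 1) * exp (-M)) := by gcongr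
    _ = (|x| / r) ^ k * (M ^ (β - 1) * exp (-M))⁻¹ := by
        rw [div_pow, mul_assoc, div_mul_eq_div_div, div_eq_mul_inv (_ / _)]

/-- The sequence `k! / Γ(kα + β)`, whose exponential generating function is `E_{α,β}`. -/
noncomputable def mittagLefflerMoment (α β : ℝ) (k : ℕ) : ℝ :=
  k ! / Gamma (k * α + β)

lemma mittagLefflerMoment_mul_pow_div (α β x : ℝ) (k : ℕ) :
    mittagLefflerMoment α β k * (x ^ k / k !) = x ^ k / Gamma (k * α + β) := by
  rw [mittagLefflerMoment, mul_comm, div_mul_div_cancel₀ (by positivity)]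

lemma mittagLeffler_eq_expGenFun (α β : ℝ) :
    mittagLeffler α β = expGenFun (mittagLefflerMoment α β) := by
  funext x
  simp only [mittagLeffler, expGenFun, mittagLefflerMoment_mul_pow_div]

lemma isStieltjesPositive_mittagLefflerMoment {α β : ℝ} (hα0 : 0 < α) (hα1 : α ≤ 1)
    (hβ : α ≤ β) : IsStieltjesPositive (mittagLefflerMoment α β) := by
  let u (n k : ℕ) : ℝ := (n : ℝ) ^ ((k : ℝ) + 1 - (k * α + β)) *
    ∏ j ∈ Finset.range (n + 1), (k * α + β + j) / (k + 1 + j)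
  have hu (n : ℕ) : IsStieltjesPositive (u (n + 1)) := by
    have hn : (0 : ℝ) < (n + 1 : ℕ) := by positivity
    convert ((IsStieltjesPositive.prod (s := Finset.range (n + 1 + 1)) fun j _ ↦
      .affine_div_affine hα0.le hα1 hβ j).mul_pow (rpow_nonneg hn.le (1 - α))).smul
        (rpow_nonneg hn.le (1 - β)) using 1
    funext k
    simp only [u, Pi.smul_apply, smul_eq_mul, Finset.prod_apply]
    rw [show (k : ℝ) + 1 - (k * α + β) = (1 - β) + (1 - α) * k by ring, rpow_add hn,
      rpow_mul hn.le, rpow_natCast]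
    ring
  refine .of_tendsto hu ((tendsto_add_atTop_iff_nat 1).2 (tendsto_pi_nhds.2 fun k ↦ ?_))
  have hGamma : Gamma (k * α + β) ≠ 0 :=
    (Gamma_pos_of_pos (add_pos_of_nonneg_of_pos (by positivity) (hα0.trans_le hβ))).ne'
  simpa only [mittagLefflerMoment, Gamma_nat_eq_factorial] using
    tendsto_rpow_mul_prod_div_Gamma (k + 1) hGamma

lemma iteratedDeriv_mittagLeffler_nonneg {α β : ℝ} (hα0 : 0 < α) (hα1 : α ≤ 1) (hβ : α ≤ β)
    (n : ℕ) (x : ℝ) : 0 ≤ iteratedDeriv n (mittagLeffler α β) x := by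
  have hsum (y : ℝ) : Summable fun k : ℕ ↦ mittagLefflerMoment α β k * (y ^ k / k !) := by
    simpa only [mittagLefflerMoment_mul_pow_div] using summable_mittagLeffler hα0 β y
  rw [mittagLeffler_eq_expGenFun, iteratedDeriv_expGenFun hsum]
  exact ((isStieltjesPositive_mittagLefflerMoment hα0 hα1 hβ).shift n).expGenFun_nonneg
    (summable_expGenFun_shift hsum n x)

theorem mittagLeffler_completelyMonotone_general {α β : ℝ} (hα0 : 0 < α) (hα1 : α ≤ 1)
    (hβ : α ≤ β) (n : ℕ) (x : ℝ) :
    0 ≤ (-1 : ℝ) ^ n * iteratedDeriv n (fun y : ℝ ↦ mittagLeffler α β (-y)) x := by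
  rw [iteratedDeriv_comp_neg, smul_eq_mul, ← mul_assoc, ← mul_pow, neg_one_mul, neg_neg, one_pow,
    one_mul]
  exact iteratedDeriv_mittagLeffler_nonneg hα0 hα1 hβ n (-x)

theorem mittagLeffler_completelyMonotone (α : ℝ) (hα0 : 0 < α) (hα1 : α ≤ 1) :
    (∀ n : ℕ, ∀ x : ℝ, 0 < x →
      0 ≤ (-1 : ℝ) ^ n * iteratedDeriv n (fun y : ℝ => mittagLeffler α 1 (-y)) x) ∧
    (∀ x : ℝ, 0 ≤ x → 0 ≤ mittagLeffler α 1 (-x)) :=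
  ⟨fun n x _ ↦ mittagLeffler_completelyMonotone_general hα0 hα1 hα1 n x,
    fun x _ ↦ by simpa using mittagLeffler_completelyMonotone_general hα0 hα1 hα1 0 x⟩
end
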